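/- Fix error metrics d^K, d^N satisfying the stated assumptions and error levels εK, εN ≥ 0. Let p_j ∈ (0,1) with p_j → 0, and let μ_{K,j}, μ_{N,j} ∈ P([0,1]) satisfy limsup_{j→∞} E_{X∼μ_{K,j}}[d^K(X)] ≤ εK and limsup_{j→∞} E_{X∼μ_{N,j}}[d^N(X)] ≤ εN. Then liminf_{j→∞} F_{p_j}(μ_{K,j}, μ_{N,j}) ≥ min over (μK, μN) ∈ C_K(εK) × C_N(εN) of KL(μK ‖ μN), and this minimum is attained. -/

import Mathlib

/- STATEMENT 5: In the sparse limit p_j → 0, for sequences of probability measures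
   asymptotically satisfying the error constraints, liminf_j F_{p_j}(μ_{K,j}, μ_{N,j})
   is at least the minimum of KL(μK ‖ μN) over the feasible region, and this minimum
   is attained. -/

open MeasureTheory Filter Topology
open scoped ENNReal

abbrev I01 : Set ℝ := Set.Icc 0 1

open Classical in
/-- Kullback–Leibler divergence with logarithm base 2, valued in `EReal`. -/
noncomputable def klDiv2 {α : Type*} [MeasurableSpace α] (μ ν : Measure α) : EReal :=
  if μ ≪ ν ∧ Integrable (fun x => Real.logb 2 ((μ.rnDeriv ν x).toReal)) μ
  then ((∫ x, Real.logb 2 ((μ.rnDeriv ν x).toReal) ∂μ : ℝ) : EReal)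
  else ⊤

noncomputable def mix {α : Type*} [MeasurableSpace α] (p : ℝ) (μ ν : Measure α) : Measure α :=
  (ENNReal.ofReal p) • μ + (ENNReal.ofReal (1 - p)) • ν

/-- `F_p(μK, μN)`, with `F_0(μK, μN) = KL(μK ‖ μN)`. -/
noncomputable def Fp {α : Type*} [MeasurableSpace α] (p : ℝ) (μK μN : Measure α) : EReal :=
  if p = 0 then klDiv2 μK μN
  else klDiv2 μK (mix p μK μN) + (((1 - p) / p : ℝ) : EReal) * klDiv2 μN (mix p μK μN)

/-!
The Donsker–Varadhan formula writes `KL(μ ‖ ν)` as a supremum of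
`∫ f dμ - ∫ (exp f - 1) dν` over bounded continuous `f`, so `KL` is jointly lower semicontinuous
for weak convergence. The second term of `F_p` is nonnegative, hence
`KL(μ_{K,j} ‖ μ_{p_j}) ≤ F_{p_j}(μ_{K,j}, μ_{N,j})`. By compactness one may pass to a limit along
an ultrafilter that realises `liminf F_{p_j}`: there `μ_{p_j}` has the same limit as `μ_{N,j}`
because `p_j → 0`, and the limit pair is feasible because `μ ↦ ∫ d dμ` is lower semicontinuous.
-/

open InformationTheory TopologicalSpace Set
open scoped BoundedContinuousFunction

section LowerSemicontinuity

lemma le_liminf_comp_of_tendsto {Y ι γ : Type*} [TopologicalSpace Y] [CompleteLinearOrder γ]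
    [DenselyOrdered γ] {G : Y → γ} (hG : LowerSemicontinuous G) {l : Filter ι} {u : ι → Y} {y : Y}
    (hu : Tendsto u l (𝓝 y)) : G y ≤ liminf (fun j => G (u j)) l :=
  (lowerSemicontinuous_iff_le_liminf.1 hG y).trans (liminf_le_liminf_of_le hu)

lemma volume_setOf_pos_and_ofReal_lt (a : ℝ≥0∞) :
    volume {t : ℝ | 0 < t ∧ ENNReal.ofReal t < a} = a := by
  rcases eq_or_ne a ⊤ with rfl | ha
  · have : {t : ℝ | 0 < t ∧ ENNReal.ofReal t < ⊤} = Ioi 0 := by ext; simp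
    rw [this, Real.volume_Ioi]
  · have : {t : ℝ | 0 < t ∧ ENNReal.ofReal t < a} = Ioo 0 a.toReal := by
      ext t
      exact and_congr_right fun ht => ENNReal.ofReal_lt_iff_lt_toReal ht.le ha
    rw [this, Real.volume_Ioo, sub_zero, ENNReal.ofReal_toReal ha]

lemma lintegral_eq_lintegral_meas_ofReal_lt {α : Type*} [MeasurableSpace α] (μ : Measure α)
    [SFinite μ] {f : α → ℝ≥0∞} (hf : Measurable f) :
    ∫⁻ x, f x ∂μ = ∫⁻ t in Ioi (0 : ℝ), μ {x | ENNReal.ofReal t < f x} := by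
  let S : Set (α × ℝ) := {z | 0 < z.2 ∧ ENNReal.ofReal z.2 < f z.1}
  have hS : MeasurableSet S :=
    (measurableSet_lt measurable_const measurable_snd).inter
      (measurableSet_lt measurable_snd.ennreal_ofReal (hf.comp measurable_fst))
  have hslice (t : ℝ) : μ ((fun x => (x, t)) ⁻¹' S) =
      (Ioi 0).indicator (fun t => μ {x | ENNReal.ofReal t < f x}) t := by
    by_cases ht : 0 < t <;> simp [S, ht]
  calc ∫⁻ x, f x ∂μ = ∫⁻ x, volume (Prod.mk x ⁻¹' S) ∂μ :=
        lintegral_congr fun x => (volume_setOf_pos_and_ofReal_lt (f x)).symm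
    _ = ∫⁻ t, μ ((fun x => (x, t)) ⁻¹' S) := by
        rw [← Measure.prod_apply hS, Measure.prod_apply_symm hS]
    _ = ∫⁻ t in Ioi (0 : ℝ), μ {x | ENNReal.ofReal t < f x} := by
        simp_rw [hslice]
        exact lintegral_indicator measurableSet_Ioi _

lemma lowerSemicontinuous_lintegral {X : Type*} [TopologicalSpace X] [PseudoMetrizableSpace X]
    [SeparableSpace X] [MeasurableSpace X] [BorelSpace X] {d : X → ℝ≥0∞}
    (hd : LowerSemicontinuous d) :
    LowerSemicontinuous fun μ : ProbabilityMeasure X => ∫⁻ x, d x ∂(μ : Measure X) := by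
  rw [lowerSemicontinuous_iff_le_liminf]
  intro μ
  simp_rw [lintegral_eq_lintegral_meas_ofReal_lt _ hd.measurable]
  have hmeas (ρ : ProbabilityMeasure X) :
      Measurable fun t : ℝ => (ρ : Measure X) {x | ENNReal.ofReal t < d x} :=
    Antitone.measurable fun s t hst =>
      measure_mono fun x hx => (ENNReal.ofReal_le_ofReal hst).trans_lt hx
  refine le_trans (lintegral_mono fun t => ?_) (lintegral_liminf_le hmeas)
  exact ProbabilityMeasure.le_liminf_measure_open_of_tendsto tendsto_id (hd.isOpen_preimage _)

end LowerSemicontinuity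

section DonskerVaradhan

/-- The Donsker–Varadhan functional `∫ f dμ - ∫ (exp f - 1) dν`, whose supremum over test
functions `f` is `KL(μ ‖ ν)`. This version, without a logarithm, is the one that suits measures
of arbitrary finite mass. -/
noncomputable def donskerVaradhan {α : Type*} [MeasurableSpace α] (f : α → ℝ) (μ ν : Measure α) :
    ℝ :=
  ∫ x, f x ∂μ - ∫ x, (Real.exp (f x) - 1) ∂ν

lemma mul_sub_exp_sub_one_le_klFun {r : ℝ} (hr : 0 ≤ r) (t : ℝ) :
    r * t - (Real.exp t - 1) ≤ klFun r := by
  rw [klFun_apply]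
  rcases hr.eq_or_lt with rfl | hr
  · simpa using (Real.exp_pos t).le
  · have h := Real.add_one_le_exp (t - Real.log r)
    rw [Real.exp_sub, Real.exp_log hr, le_div_iff₀ hr] at h
    linarith

/-- The truncation of `r` to the interval `[exp (-n), exp n]`; its logarithm is a bounded test
function that is nearly optimal in the Donsker–Varadhan formula when `r` is a density. -/
noncomputable def expClip (n : ℕ) (r : ℝ) : ℝ := max (Real.exp (-n)) (min (Real.exp n) r)

lemma continuous_expClip (n : ℕ) : Continuous (expClip n) := by unfold expClip; fun_prop

lemma expClip_mem_Icc (n : ℕ) (r : ℝ) : expClip n r ∈ Icc (Real.exp (-n)) (Real.exp n) :=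
  ⟨le_max_left _ _, max_le (Real.exp_le_exp.2 (neg_le_self n.cast_nonneg)) (min_le_left _ _)⟩

lemma expClip_pos (n : ℕ) (r : ℝ) : 0 < expClip n r :=
  (Real.exp_pos _).trans_le (expClip_mem_Icc n r).1

lemma abs_log_expClip_le (n : ℕ) (r : ℝ) : |Real.log (expClip n r)| ≤ n :=
  abs_le.2 ⟨(Real.le_log_iff_exp_le (expClip_pos n r)).2 (expClip_mem_Icc n r).1,
    (Real.log_le_iff_le_exp (expClip_pos n r)).2 (expClip_mem_Icc n r).2⟩

lemma expClip_of_mem_Icc {n : ℕ} {r : ℝ} (hr : r ∈ Icc (Real.exp (-n)) (Real.exp n)) :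
    expClip n r = r := by
  rw [expClip, min_eq_right hr.2, max_eq_right hr.1]

lemma expClip_mem_uIcc_one (n : ℕ) (r : ℝ) : expClip n r ∈ uIcc 1 r := by
  have hl : Real.exp (-n : ℝ) ≤ 1 := Real.exp_le_one_iff.2 (neg_nonpos.2 n.cast_nonneg)
  have hu : 1 ≤ Real.exp (n : ℝ) := Real.one_le_exp n.cast_nonneg
  unfold expClip
  rw [mem_uIcc]
  grind

lemma mul_log_sub_nonneg_of_mem_uIcc_one {c r : ℝ} (hc : 0 < c) (h : c ∈ uIcc 1 r) :
    0 ≤ r * Real.log c - (c - 1) := by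
  have hmul : 0 ≤ (r - c) * Real.log c := by
    rcases mem_uIcc.1 h with ⟨h1, h2⟩ | ⟨h1, h2⟩
    · exact mul_nonneg (sub_nonneg.2 h2) (Real.log_nonneg h1)
    · exact mul_nonneg_of_nonpos_of_nonpos (sub_nonpos.2 h1) (Real.log_nonpos hc.le h2)
  have hkl := klFun_nonneg hc.le
  rw [klFun_apply] at hkl
  linarith

lemma tendsto_mul_log_expClip_sub {r : ℝ} (hr : 0 ≤ r) :
    Tendsto (fun n : ℕ => r * Real.log (expClip n r) - (expClip n r - 1)) atTop
      (𝓝 (klFun r)) := by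
  have hl : Tendsto (fun n : ℕ => Real.exp (-(n : ℝ))) atTop (𝓝 0) :=
    Real.tendsto_exp_neg_atTop_nhds_zero.comp tendsto_natCast_atTop_atTop
  have hu : Tendsto (fun n : ℕ => Real.exp (n : ℝ)) atTop atTop :=
    Real.tendsto_exp_atTop.comp tendsto_natCast_atTop_atTop
  rcases hr.eq_or_lt with rfl | hr
  · have hclip (n : ℕ) : expClip n 0 = Real.exp (-n) := by
      rw [expClip, min_eq_right (Real.exp_pos _).le, max_eq_left (Real.exp_pos _).le]
    simpa [hclip, klFun_zero] using hl.const_sub 1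
  · refine tendsto_const_nhds.congr' ?_
    filter_upwards [hl.eventually_lt_const hr, hu.eventually_ge_atTop r] with n h1 h2
    rw [expClip_of_mem_Icc ⟨h1.le, h2⟩, klFun_apply]
    ring

section Measurable

variable {α : Type*} [MeasurableSpace α] {μ ν : Measure α}

lemma donskerVaradhan_indicator_of_measure_eq_zero {s : Set α} (hs : MeasurableSet s)
    (hν : ν s = 0) (c : ℝ) : donskerVaradhan (s.indicator fun _ => c) μ ν = c * μ.real s := by
  have hexp : ∫ x, (Real.exp (s.indicator (fun _ => c) x) - 1) ∂ν = 0 := by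
    refine integral_eq_zero_of_ae ?_
    filter_upwards [measure_eq_zero_iff_ae_notMem.1 hν] with x hx
    simp [hx]
  rw [donskerVaradhan, hexp, integral_indicator_const _ hs, sub_zero, smul_eq_mul, mul_comm]

variable [IsFiniteMeasure μ]

lemma absolutelyContinuous_of_donskerVaradhan_le {b : ℝ≥0∞} (hb : b ≠ ⊤)
    (h : ∀ f : α → ℝ, Measurable f → (∃ M, ∀ x, |f x| ≤ M) →
      ENNReal.ofReal (donskerVaradhan f μ ν) ≤ b) : μ ≪ ν := by
  refine Measure.AbsolutelyContinuous.mk fun s hs hν => ?_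
  by_contra hμ
  have hpos : 0 < μ.real s := ENNReal.toReal_pos hμ (measure_ne_top _ _)
  obtain ⟨n, hn⟩ := exists_nat_gt (b.toReal / μ.real s)
  have hle := h (s.indicator fun _ => (n : ℝ)) (measurable_const.indicator hs)
    ⟨n, fun x => by by_cases hx : x ∈ s <;> simp [hx]⟩
  rw [donskerVaradhan_indicator_of_measure_eq_zero hs hν, ENNReal.ofReal_le_iff_le_toReal hb] at hle
  exact hle.not_gt ((div_lt_iff₀ hpos).1 hn)

variable [IsFiniteMeasure ν]

lemma donskerVaradhan_eq_integral_rnDeriv (hμν : μ ≪ ν) {f : α → ℝ} (hf : Integrable f μ)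
    (hexp : Integrable (fun x => Real.exp (f x)) ν) :
    Integrable (fun x => (μ.rnDeriv ν x).toReal * f x - (Real.exp (f x) - 1)) ν ∧
      donskerVaradhan f μ ν =
        ∫ x, ((μ.rnDeriv ν x).toReal * f x - (Real.exp (f x) - 1)) ∂ν := by
  have hmul : Integrable (fun x => (μ.rnDeriv ν x).toReal * f x) ν :=
    (integrable_rnDeriv_smul_iff hμν).2 hf
  have hsub : Integrable (fun x => Real.exp (f x) - 1) ν := hexp.sub (integrable_const 1)
  refine ⟨hmul.sub hsub, ?_⟩
  rw [integral_sub hmul hsub, donskerVaradhan, ← integral_rnDeriv_smul hμν]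
  rfl

lemma ofReal_donskerVaradhan_le_klDiv {f : α → ℝ} (hf : Integrable f μ)
    (hexp : Integrable (fun x => Real.exp (f x)) ν) :
    ENNReal.ofReal (donskerVaradhan f μ ν) ≤ klDiv μ ν := by
  by_cases h : klDiv μ ν = ⊤
  · exact h ▸ le_top
  obtain ⟨hμν, hllr⟩ := klDiv_ne_top_iff.1 h
  obtain ⟨hint, heq⟩ := donskerVaradhan_eq_integral_rnDeriv hμν hf hexp
  rw [← ENNReal.ofReal_toReal h, toReal_klDiv_eq_integral_klFun hμν, heq]
  refine ENNReal.ofReal_le_ofReal (integral_mono hint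
    ((integrable_klFun_rnDeriv_iff hμν).2 hllr) fun x => ?_)
  exact mul_sub_exp_sub_one_le_klFun ENNReal.toReal_nonneg _

lemma klDiv_le_liminf_donskerVaradhan_log_expClip (hμν : μ ≪ ν) :
    klDiv μ ν ≤ liminf (fun n => ENNReal.ofReal
      (donskerVaradhan (fun x => Real.log (expClip n (μ.rnDeriv ν x).toReal)) μ ν)) atTop := by
  let r : α → ℝ := fun x => (μ.rnDeriv ν x).toReal
  let g : ℕ → α → ℝ := fun n x => r x * Real.log (expClip n (r x)) - (expClip n (r x) - 1)
  have hclip (n : ℕ) : Measurable fun x => expClip n (r x) :=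
    (continuous_expClip n).measurable.comp (Measure.measurable_rnDeriv μ ν).ennreal_toReal
  have hg (n : ℕ) : Measurable (g n) :=
    ((Measure.measurable_rnDeriv μ ν).ennreal_toReal.mul (hclip n).log).sub
      ((hclip n).sub_const 1)
  have hg0 (n : ℕ) (x : α) : 0 ≤ g n x :=
    mul_log_sub_nonneg_of_mem_uIcc_one (expClip_pos n _) (expClip_mem_uIcc_one n _)
  have hlim (x : α) : ENNReal.ofReal (klFun (r x)) =
      liminf (fun n => ENNReal.ofReal (g n x)) atTop :=
    (ENNReal.tendsto_ofReal
      (tendsto_mul_log_expClip_sub ENNReal.toReal_nonneg)).liminf_eq.symm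
  have hlintegral (n : ℕ) : ∫⁻ x, ENNReal.ofReal (g n x) ∂ν =
      ENNReal.ofReal (donskerVaradhan (fun x => Real.log (expClip n (r x))) μ ν) := by
    obtain ⟨hint, heq⟩ := donskerVaradhan_eq_integral_rnDeriv hμν
      (.of_bound (hclip n).log.aestronglyMeasurable n (ae_of_all _ fun x => abs_log_expClip_le n _))
      (.of_bound (hclip n).log.exp.aestronglyMeasurable (Real.exp n) (ae_of_all _ fun x => by
        simpa using (abs_le.1 (abs_log_expClip_le n (r x))).2))
    simp only [Real.exp_log (expClip_pos n _)] at hint heq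
    rw [heq, ofReal_integral_eq_lintegral_ofReal hint (ae_of_all _ (hg0 n))]
  calc klDiv μ ν = ∫⁻ x, liminf (fun n => ENNReal.ofReal (g n x)) atTop ∂ν := by
        rw [klDiv_eq_lintegral_klFun_of_ac hμν]
        exact lintegral_congr hlim
    _ ≤ liminf (fun n => ∫⁻ x, ENNReal.ofReal (g n x) ∂ν) atTop :=
        lintegral_liminf_le fun n => (hg n).ennreal_ofReal
    _ = _ := by simp_rw [hlintegral, r]

lemma klDiv_le_of_forall_donskerVaradhan_le {b : ℝ≥0∞}
    (h : ∀ f : α → ℝ, Measurable f → (∃ M, ∀ x, |f x| ≤ M) →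
      ENNReal.ofReal (donskerVaradhan f μ ν) ≤ b) : klDiv μ ν ≤ b := by
  rcases eq_or_ne b ⊤ with rfl | hb
  · exact le_top
  have hμν : μ ≪ ν := absolutelyContinuous_of_donskerVaradhan_le hb h
  refine (klDiv_le_liminf_donskerVaradhan_log_expClip hμν).trans
    ((liminf_le_liminf (.of_forall fun n => ?_)).trans_eq (liminf_const b))
  exact h _ ((continuous_expClip n).measurable.comp
    (Measure.measurable_rnDeriv μ ν).ennreal_toReal).log ⟨n, fun x => abs_log_expClip_le n _⟩

lemma tendsto_donskerVaradhan {g : ℕ → α → ℝ} {f : α → ℝ} {M : ℝ} (hg : ∀ n, Measurable (g n))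
    (hM : ∀ n x, |g n x| ≤ M) (hμ : ∀ᵐ x ∂μ, Tendsto (fun n => g n x) atTop (𝓝 (f x)))
    (hν : ∀ᵐ x ∂ν, Tendsto (fun n => g n x) atTop (𝓝 (f x))) :
    Tendsto (fun n => donskerVaradhan (g n) μ ν) atTop (𝓝 (donskerVaradhan f μ ν)) := by
  refine Tendsto.sub ?_ ?_
  · exact tendsto_integral_of_dominated_convergence (fun _ => M)
      (fun n => (hg n).aestronglyMeasurable) (integrable_const M)
      (fun n => ae_of_all _ (hM n)) hμ
  · refine tendsto_integral_of_dominated_convergence (fun _ => Real.exp M + 1)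
      (fun n => ((hg n).exp.sub_const 1).aestronglyMeasurable) (integrable_const _)
      (fun n => ae_of_all _ fun x => ?_)
      (hν.mono fun x hx => ((Real.continuous_exp.tendsto _).comp hx).sub_const 1)
    refine (norm_sub_le _ _).trans (add_le_add ?_ (by simp))
    simpa using (abs_le.1 (hM n x)).2

end Measurable

lemma exists_seq_boundedContinuous_tendsto_ae {X : Type*} [TopologicalSpace X] [NormalSpace X]
    [MeasurableSpace X] [BorelSpace X] {ρ : Measure X} [IsFiniteMeasure ρ] [ρ.WeaklyRegular]
    {f : X → ℝ} (hf : Measurable f) {M : ℝ} (hM : ∀ x, |f x| ≤ M) :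
    ∃ g : ℕ → X →ᵇ ℝ, (∀ n x, |g n x| ≤ |M|) ∧
      ∀ᵐ x ∂ρ, Tendsto (fun n => g n x) atTop (𝓝 (f x)) := by
  have hfL : MemLp f 1 ρ := MemLp.of_bound hf.aestronglyMeasurable M (ae_of_all _ hM)
  choose k hk _ using fun n : ℕ => hfL.exists_boundedContinuous_eLpNorm_sub_le ENNReal.one_ne_top
    (ENNReal.inv_ne_zero.2 (ENNReal.natCast_ne_top n))
  have hkL : Tendsto (fun n => eLpNorm (⇑(k n) - f) 1 ρ) atTop (𝓝 0) :=
    tendsto_of_tendsto_of_tendsto_of_le_of_le tendsto_const_nhds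
      ENNReal.tendsto_inv_nat_nhds_zero (fun _ => zero_le)
      fun n => (eLpNorm_sub_comm _ _ 1 ρ).trans_le (hk n)
  obtain ⟨φ, -, hφ⟩ := (tendstoInMeasure_of_tendsto_eLpNorm one_ne_zero
    (fun n => (k n).continuous.aestronglyMeasurable) hf.aestronglyMeasurable
    hkL).exists_seq_tendsto_ae
  have hM0 : -|M| ≤ |M| := neg_le_self (abs_nonneg M)
  let clip : ℝ → ℝ := fun y => projIcc (-|M|) |M| hM0 y
  have hclip : Continuous clip := continuous_subtype_val.comp continuous_projIcc
  have hclipM (y : ℝ) : |clip y| ≤ |M| := abs_le.2 (projIcc (-|M|) |M| hM0 y).2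
  have hclipf (x : X) : clip (f x) = f x :=
    congrArg Subtype.val (projIcc_of_mem hM0 (abs_le.1 ((hM x).trans (le_abs_self M))))
  refine ⟨fun n => .ofNormedAddCommGroup (fun x => clip (k (φ n) x))
    (hclip.comp (k (φ n)).continuous) |M| fun x => hclipM _, fun n x => hclipM _, ?_⟩
  filter_upwards [hφ] with x hx
  simpa only [hclipf] using! (hclip.tendsto (f x)).comp hx

section Topological

variable {X : Type*} [TopologicalSpace X] [MeasurableSpace X]

lemma continuous_donskerVaradhan [OpensMeasurableSpace X] (g : X →ᵇ ℝ) :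
    Continuous fun q : FiniteMeasure X × FiniteMeasure X =>
      donskerVaradhan g (q.1 : Measure X) (q.2 : Measure X) := by
  have hbound (x : X) : ‖Real.exp (g x) - 1‖ ≤ Real.exp ‖g‖ + 1 := by
    refine (norm_sub_le _ _).trans (add_le_add ?_ (by simp))
    simpa using (le_abs_self _).trans (g.norm_coe_le_norm x)
  let e : X →ᵇ ℝ := .ofNormedAddCommGroup (fun x => Real.exp (g x) - 1) (by fun_prop) _ hbound
  exact ((FiniteMeasure.continuous_integral_boundedContinuousFunction g).comp continuous_fst).sub
    ((FiniteMeasure.continuous_integral_boundedContinuousFunction e).comp continuous_snd)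

variable [PseudoMetrizableSpace X] [BorelSpace X]

theorem klDiv_eq_iSup_donskerVaradhan (μ ν : Measure X) [IsFiniteMeasure μ] [IsFiniteMeasure ν] :
    klDiv μ ν = ⨆ g : X →ᵇ ℝ, ENNReal.ofReal (donskerVaradhan g μ ν) := by
  refine le_antisymm (klDiv_le_of_forall_donskerVaradhan_le fun f hf ⟨M, hM⟩ => ?_)
    (iSup_le fun g => ?_)
  · obtain ⟨g, hgM, hg⟩ := exists_seq_boundedContinuous_tendsto_ae (ρ := μ + ν) hf hM
    obtain ⟨hμ, hν⟩ := ae_add_measure_iff.1 hg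
    refine le_of_tendsto' (ENNReal.tendsto_ofReal (tendsto_donskerVaradhan
      (fun n => (g n).continuous.measurable) hgM hμ hν)) fun n => ?_
    exact le_iSup (fun g : X →ᵇ ℝ => ENNReal.ofReal (donskerVaradhan g μ ν)) (g n)
  · refine ofReal_donskerVaradhan_le_klDiv (g.integrable μ)
      (Integrable.of_bound (by fun_prop) (Real.exp ‖g‖) (ae_of_all _ fun x => ?_))
    simpa using (le_abs_self _).trans (g.norm_coe_le_norm x)

theorem lowerSemicontinuous_klDiv :
    LowerSemicontinuous fun q : FiniteMeasure X × FiniteMeasure X =>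
      klDiv (q.1 : Measure X) (q.2 : Measure X) := by
  simp_rw [klDiv_eq_iSup_donskerVaradhan]
  exact lowerSemicontinuous_iSup fun g =>
    (ENNReal.continuous_ofReal.comp (continuous_donskerVaradhan g)).lowerSemicontinuous

end Topological

end DonskerVaradhan

section Mixture

variable {α : Type*} [MeasurableSpace α] {p : ℝ} {μ ν : Measure α}

lemma klDiv2_eq_klDiv_mul [IsProbabilityMeasure μ] [IsProbabilityMeasure ν] :
    klDiv2 μ ν = ((klDiv μ ν * ENNReal.ofReal (Real.log 2)⁻¹ : ℝ≥0∞) : EReal) := by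
  have hlog : 0 < (Real.log 2)⁻¹ := inv_pos.2 (Real.log_pos one_lt_two)
  have hlogb : (fun x => Real.logb 2 (μ.rnDeriv ν x).toReal) =
      fun x => llr μ ν x * (Real.log 2)⁻¹ := rfl
  have hint : Integrable (fun x => Real.logb 2 (μ.rnDeriv ν x).toReal) μ ↔
      Integrable (llr μ ν) μ := by
    rw [hlogb]
    exact integrable_mul_const_iff (IsUnit.mk0 _ hlog.ne') _
  rw [klDiv2, hint]
  split_ifs with h
  · have htop : klDiv μ ν ≠ ⊤ := klDiv_ne_top h.1 h.2
    rw [hlogb, integral_mul_const, ← toReal_klDiv_of_measure_eq h.1 (by simp),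
      ← ENNReal.ofReal_toReal htop, ← ENNReal.ofReal_mul ENNReal.toReal_nonneg,
      EReal.coe_ennreal_ofReal, max_eq_left (mul_nonneg ENNReal.toReal_nonneg hlog.le),
      ENNReal.toReal_ofReal ENNReal.toReal_nonneg]
  · rw [← klDiv_ne_top_iff, not_not] at h
    rw [h, ENNReal.top_mul (ENNReal.ofReal_pos.2 hlog).ne', EReal.coe_ennreal_top]

lemma klDiv2_nonneg [IsProbabilityMeasure μ] [IsProbabilityMeasure ν] : 0 ≤ klDiv2 μ ν :=
  klDiv2_eq_klDiv_mul (μ := μ) (ν := ν) ▸ EReal.coe_ennreal_nonneg _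

lemma isProbabilityMeasure_mix [IsProbabilityMeasure μ] [IsProbabilityMeasure ν]
    (hp : p ∈ Icc (0 : ℝ) 1) : IsProbabilityMeasure (mix p μ ν) where
  measure_univ := by
    simp [mix, ← ENNReal.ofReal_add hp.1 (sub_nonneg.2 hp.2)]

/-- `mix p μ ν` as a point of the space of probability measures with its weak topology. -/
noncomputable def mixProbabilityMeasure (hp : p ∈ Icc (0 : ℝ) 1) (μ ν : ProbabilityMeasure α) :
    ProbabilityMeasure α :=
  ⟨mix p μ ν, isProbabilityMeasure_mix hp⟩

lemma mix_zero : mix 0 μ ν = ν := by simp [mix]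

lemma klDiv2_mix_le_Fp [IsProbabilityMeasure μ] [IsProbabilityMeasure ν]
    (hp : p ∈ Icc (0 : ℝ) 1) : klDiv2 μ (mix p μ ν) ≤ Fp p μ ν := by
  have := isProbabilityMeasure_mix (μ := μ) (ν := ν) hp
  unfold Fp
  split_ifs with h
  · rw [h, mix_zero]
  · exact le_add_of_nonneg_right (mul_nonneg
      (EReal.coe_nonneg.2 (div_nonneg (sub_nonneg.2 hp.2) hp.1)) klDiv2_nonneg)

lemma integral_mix (hp : p ∈ Icc (0 : ℝ) 1) {f : α → ℝ} (hμ : Integrable f μ)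
    (hν : Integrable f ν) : ∫ x, f x ∂(mix p μ ν) = p * ∫ x, f x ∂μ + (1 - p) * ∫ x, f x ∂ν := by
  rw [mix, integral_add_measure (hμ.smul_measure ENNReal.ofReal_ne_top)
    (hν.smul_measure ENNReal.ofReal_ne_top), integral_smul_measure, integral_smul_measure,
    ENNReal.toReal_ofReal hp.1, ENNReal.toReal_ofReal (sub_nonneg.2 hp.2), smul_eq_mul,
    smul_eq_mul]

end Mixture

section WeakLimits

variable {X : Type*} [TopologicalSpace X] [MeasurableSpace X] [BorelSpace X]

lemma lowerSemicontinuous_klDiv2 [PseudoMetrizableSpace X] :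
    LowerSemicontinuous fun q : ProbabilityMeasure X × ProbabilityMeasure X =>
      klDiv2 (q.1 : Measure X) (q.2 : Measure X) := by
  simp_rw [klDiv2_eq_klDiv_mul]
  have hlsc := (lowerSemicontinuous_klDiv (X := X)).comp
    (ProbabilityMeasure.toFiniteMeasure_continuous.prodMap
      ProbabilityMeasure.toFiniteMeasure_continuous)
  exact (continuous_coe_ennreal_ereal.comp
    (ENNReal.continuous_mul_const ENNReal.ofReal_ne_top)).comp_lowerSemicontinuous hlsc
    fun a b hab => EReal.coe_ennreal_le_coe_ennreal_iff.2 (mul_le_mul_left hab _)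

lemma tendsto_mixProbabilityMeasure {ι : Type*} {l : Filter ι} {p : ι → ℝ}
    (hp : ∀ j, p j ∈ Icc (0 : ℝ) 1) (hp0 : Tendsto p l (𝓝 0)) (μ : ι → ProbabilityMeasure X)
    {ν : ι → ProbabilityMeasure X} {ν' : ProbabilityMeasure X} (hν : Tendsto ν l (𝓝 ν')) :
    Tendsto (fun j => mixProbabilityMeasure (hp j) (μ j) (ν j)) l (𝓝 ν') := by
  rw [ProbabilityMeasure.tendsto_iff_forall_integral_tendsto] at hν ⊢
  intro f
  have hK : Tendsto (fun j => p j * ∫ x, f x ∂(μ j : Measure X)) l (𝓝 0) :=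
    hp0.zero_mul_isBoundedUnder_le
      (isBoundedUnder_of ⟨‖f‖, fun j => f.norm_integral_le_norm (μ j : Measure X)⟩)
  have hN : Tendsto (fun j => (1 - p j) * ∫ x, f x ∂(ν j : Measure X)) l
      (𝓝 (∫ x, f x ∂(ν' : Measure X))) := by
    simpa using (hp0.const_sub 1).mul (hν f)
  have hsum := hK.add hN
  rw [zero_add] at hsum
  exact hsum.congr fun j => (integral_mix (hp j) (f.integrable _) (f.integrable _)).symm

/-- The probability measures whose expected error `E[d]` is at most `ε`, i.e. the sets `C_K(ε)`
and `C_N(ε)` for `d = d^K` and `d = d^N`. -/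
def feasibleSet (d : X → ℝ≥0∞) (ε : ℝ≥0∞) : Set (ProbabilityMeasure X) :=
  {μ | ∫⁻ x, d x ∂(μ : Measure X) ≤ ε}

variable [PseudoMetrizableSpace X] [SeparableSpace X]

lemma isClosed_feasibleSet {d : X → ℝ≥0∞} (hd : LowerSemicontinuous d) (ε : ℝ≥0∞) :
    IsClosed (feasibleSet d ε) :=
  (lowerSemicontinuous_lintegral hd).isClosed_preimage ε

lemma mem_feasibleSet_of_tendsto {ι : Type*} {l l' : Filter ι} [l'.NeBot] (hl : l' ≤ l)
    {d : X → ℝ≥0∞} (hd : LowerSemicontinuous d) {ε : ℝ≥0∞} {μ : ι → ProbabilityMeasure X}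
    (hε : limsup (fun j => ∫⁻ x, d x ∂(μ j : Measure X)) l ≤ ε) {μ' : ProbabilityMeasure X}
    (hμ : Tendsto μ l' (𝓝 μ')) : μ' ∈ feasibleSet d ε :=
  calc ∫⁻ x, d x ∂(μ' : Measure X)
      ≤ liminf (fun j => ∫⁻ x, d x ∂(μ j : Measure X)) l' :=
        le_liminf_comp_of_tendsto (lowerSemicontinuous_lintegral hd) hμ
    _ ≤ limsup (fun j => ∫⁻ x, d x ∂(μ j : Measure X)) l' := liminf_le_limsup
    _ ≤ limsup (fun j => ∫⁻ x, d x ∂(μ j : Measure X)) l := limsup_le_limsup_of_le hl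
    _ ≤ ε := hε

end WeakLimits

section SparseLimit

variable {X ι : Type*} [TopologicalSpace X] [CompactSpace X] [MetrizableSpace X]
  [MeasurableSpace X] [BorelSpace X] {l : Filter ι} [l.NeBot] {dK dN : X → ℝ≥0∞} {εK εN : ℝ≥0∞}
  {p : ι → ℝ} {μ ν : ι → ProbabilityMeasure X}

lemma exists_feasible_klDiv2_le_liminf_Fp
    (hdK : LowerSemicontinuous dK) (hdN : LowerSemicontinuous dN)
    (hp : ∀ j, p j ∈ Icc (0 : ℝ) 1) (hp0 : Tendsto p l (𝓝 0))
    (hK : limsup (fun j => ∫⁻ x, dK x ∂(μ j : Measure X)) l ≤ εK)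
    (hN : limsup (fun j => ∫⁻ x, dN x ∂(ν j : Measure X)) l ≤ εN) :
    ∃ q ∈ feasibleSet dK εK ×ˢ feasibleSet dN εN,
      klDiv2 (q.1 : Measure X) (q.2 : Measure X) ≤
        liminf (fun j => Fp (p j) (μ j : Measure X) (ν j : Measure X)) l := by
  obtain ⟨U, hU, hF⟩ := mapClusterPt_iff_ultrafilter.1
    (MapClusterPt.liminf (f := l) (u := fun j => Fp (p j) (μ j : Measure X) (ν j : Measure X)))
  have hμ : Tendsto μ U (𝓝 (U.map μ).lim) := (U.map μ).le_nhds_lim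
  have hν : Tendsto ν U (𝓝 (U.map ν).lim) := (U.map ν).le_nhds_lim
  refine ⟨((U.map μ).lim, (U.map ν).lim),
    ⟨mem_feasibleSet_of_tendsto hU hdK hK hμ, mem_feasibleSet_of_tendsto hU hdN hN hν⟩, ?_⟩
  have hmix := tendsto_mixProbabilityMeasure hp (hp0.mono_left hU) μ hν
  calc klDiv2 ((U.map μ).lim : Measure X) ((U.map ν).lim : Measure X)
      ≤ liminf (fun j => klDiv2 (μ j : Measure X) (mix (p j) (μ j) (ν j))) U :=
        le_liminf_comp_of_tendsto lowerSemicontinuous_klDiv2 (hμ.prodMk_nhds hmix)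
    _ ≤ liminf (fun j => Fp (p j) (μ j : Measure X) (ν j : Measure X)) U :=
        liminf_le_liminf (Eventually.of_forall fun j => klDiv2_mix_le_Fp (hp j))
    _ = liminf (fun j => Fp (p j) (μ j : Measure X) (ν j : Measure X)) l := hF.liminf_eq

theorem stmt_5_general
    (hdK : LowerSemicontinuous dK) (hdN : LowerSemicontinuous dN)
    (hp : ∀ j, p j ∈ Icc (0 : ℝ) 1) (hp0 : Tendsto p l (𝓝 0))
    (hK : limsup (fun j => ∫⁻ x, dK x ∂(μ j : Measure X)) l ≤ εK)
    (hN : limsup (fun j => ∫⁻ x, dN x ∂(ν j : Measure X)) l ≤ εN) :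
    ∃ q ∈ feasibleSet dK εK ×ˢ feasibleSet dN εN,
      IsMinOn (fun q : ProbabilityMeasure X × ProbabilityMeasure X =>
        klDiv2 (q.1 : Measure X) (q.2 : Measure X)) (feasibleSet dK εK ×ˢ feasibleSet dN εN) q ∧
      klDiv2 (q.1 : Measure X) (q.2 : Measure X) ≤
        liminf (fun j => Fp (p j) (μ j : Measure X) (ν j : Measure X)) l := by
  obtain ⟨q', hq', hle⟩ := exists_feasible_klDiv2_le_liminf_Fp hdK hdN hp hp0 hK hN
  have hcompact : IsCompact (feasibleSet dK εK ×ˢ feasibleSet dN εN) :=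
    ((isClosed_feasibleSet hdK εK).prod (isClosed_feasibleSet hdN εN)).isCompact
  obtain ⟨q, hq, hmin⟩ := LowerSemicontinuousOn.exists_isMinOn ⟨q', hq'⟩ hcompact
    (lowerSemicontinuous_klDiv2.lowerSemicontinuousOn _)
  exact ⟨q, hq, hmin, (hmin hq').trans hle⟩

end SparseLimit

theorem stmt_5
    -- error metrics d^K, d^N : [0,1] → [0,∞], lower semicontinuous,
    -- with d^K(1) = 0, d^N(0) = 0, and finite at some common point c
    (dK dN : I01 → ℝ≥0∞)
    (hdK_lsc : LowerSemicontinuous dK) (hdN_lsc : LowerSemicontinuous dN)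
    (hdK1 : dK ⟨1, Set.right_mem_Icc.mpr zero_le_one⟩ = 0)
    (hdN0 : dN ⟨0, Set.left_mem_Icc.mpr zero_le_one⟩ = 0)
    (hc : ∃ c : I01, dK c ≠ ⊤ ∧ dN c ≠ ⊤)
    -- error levels
    (εK εN : ℝ) (hεK : 0 ≤ εK) (hεN : 0 ≤ εN)
    -- sequence p_j ∈ (0,1), p_j → 0
    (pj : ℕ → ℝ) (hpj : ∀ j, pj j ∈ Set.Ioo (0 : ℝ) 1)
    (hpj0 : Tendsto pj atTop (nhds 0))
    -- sequences of probability measures asymptotically satisfying the error constraints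
    (μKj μNj : ℕ → Measure I01)
    (hKprob : ∀ j, IsProbabilityMeasure (μKj j)) (hNprob : ∀ j, IsProbabilityMeasure (μNj j))
    (hEK : Filter.limsup (fun j => ∫⁻ x, dK x ∂(μKj j)) atTop ≤ ENNReal.ofReal εK)
    (hEN : Filter.limsup (fun j => ∫⁻ x, dN x ∂(μNj j)) atTop ≤ ENNReal.ofReal εN) :
    ∃ μKs μNs : Measure I01,
      IsProbabilityMeasure μKs ∧ IsProbabilityMeasure μNs ∧
      (∫⁻ x, dK x ∂μKs) ≤ ENNReal.ofReal εK ∧ (∫⁻ x, dN x ∂μNs) ≤ ENNReal.ofReal εN ∧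
      -- (μKs, μNs) attains the minimum of the KL divergence over the feasible region
      (∀ μK' μN' : Measure I01, IsProbabilityMeasure μK' → IsProbabilityMeasure μN' →
        (∫⁻ x, dK x ∂μK') ≤ ENNReal.ofReal εK → (∫⁻ x, dN x ∂μN') ≤ ENNReal.ofReal εN →
        klDiv2 μKs μNs ≤ klDiv2 μK' μN') ∧
      -- the liminf lower bound
      klDiv2 μKs μNs ≤ Filter.liminf (fun j => Fp (pj j) (μKj j) (μNj j)) atTop := by
  obtain ⟨q, ⟨hqK, hqN⟩, hmin, hle⟩ := stmt_5_general
    (μ := fun j => ⟨μKj j, hKprob j⟩) (ν := fun j => ⟨μNj j, hNprob j⟩)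
    hdK_lsc hdN_lsc (fun j => Ioo_subset_Icc_self (hpj j)) hpj0 hEK hEN
  exact ⟨q.1, q.2, inferInstance, inferInstance, hqK, hqN, fun μ ν hμ hν hK hN =>
    isMinOn_iff.1 hmin (⟨μ, hμ⟩, ⟨ν, hν⟩) ⟨hK, hN⟩, hle⟩
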